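/- arXiv:1801.09825 — 5 statements merged into one kernel-verified Lean document; each statement's English description precedes it below -/
import Mathlib

section
/- For every measurable g : ℝ → ℝ with g·φ₂ integrable, the early-arrival part of the scheduling cost transforms under the change of variable x = −φ₂(t) as ∫_{−∞}^{t*} g(t)·φ₂(t) dt = −∫_{−∞}^{a} x·g(t₁(x))·(1/β) dx. -/
/-!
On `t ≤ tstar` the cost is affine, `-φ₂ t = β * (t - tstar) - α * Υ₀`, and `t₁` is its inverse.
Hence `t₁` maps `Iic a` bijectively onto `Iic tstar` with constant derivative `1 / β`, and the
identity is the one-dimensional change of variables formula together with `φ₂ (t₁ x) = -x`.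
-/

open MeasureTheory

/-- Change of variable `x = −φ₂(t)` for the early-arrival part:
`∫_{−∞}^{t*} g(t)·φ₂(t) dt = −∫_{−∞}^{a} x·g(t₁(x))·(1/β) dx`. -/
theorem early_arrival_change_of_variables
    (α β γ Υ₀ tstar : ℝ) (hα : 0 < α) (hβ : 0 < β) (hγ : 0 < γ) (hΥ₀ : 0 ≤ Υ₀)
    (a : ℝ) (ha : a = -(α * Υ₀))
    (φ₂ : ℝ → ℝ)
    (hφ₂ : ∀ t, φ₂ t = α * Υ₀ + β * max (tstar - t) 0 + γ * max (t - tstar) 0)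
    (t₁ t₂ : ℝ → ℝ)
    (ht₁ : ∀ x, t₁ x = tstar + (x + α * Υ₀) / β)
    (ht₂ : ∀ x, t₂ x = tstar - (x + α * Υ₀) / γ)
    (g : ℝ → ℝ) (hmeas : Measurable g)
    (hint : Integrable (fun t => g t * φ₂ t)) :
    ∫ t in Set.Iic tstar, g t * φ₂ t =
      -∫ x in Set.Iic a, x * g (t₁ x) * (1 / β) := by
  have himg : t₁ '' Set.Iic a = Set.Iic tstar := by
    ext t
    simp only [Set.mem_image, Set.mem_Iic, ht₁, ha]
    constructor
    · rintro ⟨x, hx, rfl⟩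
      have : (x + α * Υ₀) / β ≤ 0 := div_nonpos_of_nonpos_of_nonneg (by linarith) hβ.le
      linarith
    · intro ht
      refine ⟨β * (t - tstar) - α * Υ₀, ?_, ?_⟩
      · nlinarith
      · field_simp
        ring
  have hderiv : ∀ x ∈ Set.Iic a, HasDerivWithinAt t₁ (1 / β) (Set.Iic a) x := by
    intro x _
    rw [funext ht₁]
    exact ((((hasDerivAt_id x).add_const (α * Υ₀)).div_const β).const_add
      tstar).hasDerivWithinAt
  have hinj : Set.InjOn t₁ (Set.Iic a) := by
    intro x _ y _ hxy
    simp only [ht₁] at hxy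
    field_simp at hxy
    linarith
  rw [← himg, integral_image_eq_integral_abs_deriv_smul measurableSet_Iic hderiv hinj,
    ← integral_neg]
  refine setIntegral_congr_fun measurableSet_Iic fun x hx => ?_
  -- On the early branch `t₁` inverts `-φ₂`, so the cost at `t₁ x` is `-x`.
  have hφ : φ₂ (t₁ x) = -x := by
    have hx' : x ≤ -(α * Υ₀) := ha ▸ hx
    have hneg : (x + α * Υ₀) / β ≤ 0 := div_nonpos_of_nonpos_of_nonneg (by linarith) hβ.le
    rw [hφ₂, ht₁, max_eq_left (by linarith), max_eq_right (by linarith)]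
    field_simp
    ring
  simp only [hφ, smul_eq_mul, abs_of_pos (one_div_pos.mpr hβ)]
  ring
end

section
/- If the imaginary density k associated with an arrival flow-rate g is defined by k(x) = (1/β)·g(t₁(x)) + (1/γ)·g(t₂(x)) for x ≤ a, then the two objective functions are equal: Φ(k) = −∫_{−∞}^{a} x·k(x) dx = ∫_ℝ g(t)·φ₂(t) dt = Φ'(g). That is, the SPUE optimization objective and the ATUE optimization objective coincide under the scheduling-payoff change of variables. -/
/-!
The scheduling payoff `x ≤ a` is realised by exactly two arrival times: an early one `t₁ x ≤ tstar`
and a late one `t₂ x ≥ tstar`, both of scheduling cost `φ₂ = -x`. Both `t₁` and `t₂` are affine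
maps, with slopes `1/β` and `-1/γ`, carrying `Iic a` onto `Iic tstar` and `Ici tstar`. Splitting
`∫ g φ₂` at `tstar` and substituting `t = t₁ x`, `t = t₂ x` in the two halves gives
`∫_{Iic a} (1/β) g(t₁ x) (-x)` and `∫_{Iic a} (1/γ) g(t₂ x) (-x)`, whose sum is `-∫ x k(x)`.
Integrability of `g φ₂` transfers to both halves by the same substitution, so the sum of
integrals is the integral of the sum.
-/

open MeasureTheory

/-- Affine change of variables on a set, for the integral and for integrability. -/
lemma affine_change_of_variables (F : ℝ → ℝ) (T : ℝ → ℝ) (a c m : ℝ) (hm : m ≠ 0)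
    (hT : ∀ x, T x = c + (x - a) * m) {s : Set ℝ} (hs : MeasurableSet s) :
    (IntegrableOn F (T '' s) ↔ IntegrableOn (fun x => |m| * F (T x)) s) ∧
      ∫ t in T '' s, F t = ∫ x in s, |m| * F (T x) := by
  have hd : ∀ x ∈ s, HasDerivWithinAt T m s x := by
    intro x _
    have h : HasDerivAt (fun x : ℝ => c + (x - a) * m) (1 * m) x :=
      (((hasDerivAt_id x).sub_const a).mul_const m).const_add c
    rw [one_mul, ← funext hT] at h
    exact h.hasDerivWithinAt
  have hi : Set.InjOn T s := by
    intro x _ y _ hxy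
    simp only [hT] at hxy
    have := mul_right_cancel₀ hm (add_left_cancel hxy)
    linarith
  exact ⟨integrableOn_image_iff_integrableOn_abs_deriv_smul hs hd hi F,
    integral_image_eq_integral_abs_deriv_smul hs hd hi F⟩

/-- If the imaginary density `k` associated with an arrival flow-rate `g` is defined by
`k x = (1/β)·g(t₁ x) + (1/γ)·g(t₂ x)` for `x ≤ a`, then the SPUE objective equals the
ATUE objective: `Φ(k) = −∫_{−∞}^{a} x·k(x) dx = ∫_ℝ g(t)·φ₂(t) dt = Φ'(g)`. -/
theorem spue_atue_objectives_coincide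
    (α β γ Υ₀ tstar : ℝ) (hα : 0 < α) (hβ : 0 < β) (hγ : 0 < γ) (hΥ₀ : 0 ≤ Υ₀)
    (a : ℝ) (ha : a = -(α * Υ₀))
    (φ₂ : ℝ → ℝ)
    (hφ₂ : ∀ t, φ₂ t = α * Υ₀ + β * max (tstar - t) 0 + γ * max (t - tstar) 0)
    (t₁ t₂ : ℝ → ℝ)
    (ht₁ : ∀ x, t₁ x = tstar + (x + α * Υ₀) / β)
    (ht₂ : ∀ x, t₂ x = tstar - (x + α * Υ₀) / γ)
    (g : ℝ → ℝ) (hmeas : Measurable g)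
    (hint : Integrable (fun t => g t * φ₂ t))
    (k : ℝ → ℝ)
    (hk : ∀ x ≤ a, k x = (1 / β) * g (t₁ x) + (1 / γ) * g (t₂ x)) :
    (-∫ x in Set.Iic a, x * k x) = ∫ t, g t * φ₂ t := by
  have him₁ : t₁ '' Set.Iic a = Set.Iic tstar := by
    ext t
    simp only [Set.mem_image, Set.mem_Iic, ht₁]
    constructor
    · rintro ⟨x, hx, rfl⟩
      have : (x + α * Υ₀) / β ≤ 0 := div_nonpos_of_nonpos_of_nonneg (by linarith) hβ.le
      linarith
    · intro h
      refine ⟨a + β * (t - tstar), by nlinarith, ?_⟩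
      rw [ha]; field_simp; ring
  have him₂ : t₂ '' Set.Iic a = Set.Ici tstar := by
    ext t
    simp only [Set.mem_image, Set.mem_Iic, Set.mem_Ici, ht₂]
    constructor
    · rintro ⟨x, hx, rfl⟩
      have : (x + α * Υ₀) / γ ≤ 0 := div_nonpos_of_nonpos_of_nonneg (by linarith) hγ.le
      linarith
    · intro h
      refine ⟨a - γ * (t - tstar), by nlinarith, ?_⟩
      rw [ha]; field_simp; ring
  have hc₁ : ∀ x ≤ a, φ₂ (t₁ x) = -x := by
    intro x hx
    have h : (x + α * Υ₀) / β ≤ 0 := div_nonpos_of_nonpos_of_nonneg (by linarith) hβ.le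
    rw [hφ₂, ht₁, max_eq_left (by linarith), max_eq_right (by linarith)]
    field_simp; ring
  have hc₂ : ∀ x ≤ a, φ₂ (t₂ x) = -x := by
    intro x hx
    have h : (x + α * Υ₀) / γ ≤ 0 := div_nonpos_of_nonpos_of_nonneg (by linarith) hγ.le
    rw [hφ₂, ht₂, max_eq_right (by linarith), max_eq_left (by linarith)]
    field_simp; ring
  obtain ⟨hi₁, he₁⟩ := affine_change_of_variables (fun t => g t * φ₂ t) t₁ a tstar (1 / β)
    (by positivity) (by intro x; rw [ht₁, ha]; ring) (measurableSet_Iic (a := a))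
  obtain ⟨hi₂, he₂⟩ := affine_change_of_variables (fun t => g t * φ₂ t) t₂ a tstar (-(1 / γ))
    (neg_ne_zero.2 (by positivity)) (by intro x; rw [ht₂, ha]; ring) (measurableSet_Iic (a := a))
  have hsplit : ∫ t, g t * φ₂ t
      = (∫ t in Set.Iic tstar, g t * φ₂ t) + ∫ t in Set.Ici tstar, g t * φ₂ t := by
    rw [integral_Ici_eq_integral_Ioi,
      intervalIntegral.integral_Iic_add_Ioi hint.integrableOn hint.integrableOn]
  rw [hsplit, ← him₁, ← him₂, he₁, he₂,
    ← integral_add (hi₁.1 hint.integrableOn) (hi₂.1 hint.integrableOn), ← integral_neg]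
  refine setIntegral_congr_fun measurableSet_Iic fun x hx => ?_
  have hx' : x ≤ a := hx
  simp only [hk x hx', hc₁ x hx', hc₂ x hx', abs_neg,
    abs_of_pos (one_div_pos.2 hβ), abs_of_pos (one_div_pos.2 hγ)]
  ring
end

section
/- If the imaginary density k associated with an arrival flow-rate g is defined by k(x) = (1/β)·g(t₁(x)) + (1/γ)·g(t₂(x)) for x ≤ a, then the total mass is conserved under the change of variables: ∫_{−∞}^{a} k(x) dx = ∫_ℝ g(t) dt. -/
open MeasureTheory

/-!
On `(-∞, a]` the map `t₁` is an increasing affine bijection onto `(-∞, t*]` with slope `1/β`, and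
`t₂` is a decreasing affine bijection onto `[t*, ∞)` with slope `-1/γ`. Changing variables along
each (`integral_comp_affine_image`) turns the two terms of `k` into the integrals of `g` over these
half-lines, which together cover `ℝ` and overlap only at the null set `{t*}`.
-/

/-- Change of variables along an affine map `x ↦ m + c * (x - a)` with `c ≠ 0`, including the
integrability of the transformed function, which is needed to split sums of such integrals. -/
theorem integral_comp_affine_image {g : ℝ → ℝ} (hg : Integrable g) (m a : ℝ) {c : ℝ}
    (hc : c ≠ 0) {s : Set ℝ} (hs : MeasurableSet s) :
    IntegrableOn (fun x => |c| * g (m + c * (x - a))) s ∧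
      ∫ x in s, |c| * g (m + c * (x - a)) = ∫ t in (fun x => m + c * (x - a)) '' s, g t := by
  have hderiv : ∀ x ∈ s, HasDerivWithinAt (fun x => m + c * (x - a)) c s x := fun x _ => by
    simpa using ((((hasDerivAt_id x).sub_const a).const_mul c).const_add m).hasDerivWithinAt
  have hinj : Set.InjOn (fun x => m + c * (x - a)) s := fun x _ y _ h => by
    simpa [hc] using h
  exact ⟨(integrableOn_image_iff_integrableOn_abs_deriv_smul hs hderiv hinj g).1 hg.integrableOn,
    (integral_image_eq_integral_abs_deriv_smul hs hderiv hinj g).symm⟩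

theorem affine_image_Iic_of_pos (m a : ℝ) {c : ℝ} (hc : 0 < c) :
    (fun x => m + c * (x - a)) '' Set.Iic a = Set.Iic m := by
  ext t
  constructor
  · rintro ⟨x, hx, rfl⟩
    have : c * (x - a) ≤ 0 := mul_nonpos_of_nonneg_of_nonpos hc.le (sub_nonpos.2 hx)
    simpa using this
  · intro ht
    refine ⟨a + (t - m) / c, ?_, by field_simp; ring⟩
    have : (t - m) / c ≤ 0 := div_nonpos_of_nonpos_of_nonneg (sub_nonpos.2 ht) hc.le
    simpa using this

theorem affine_image_Iic_of_neg (m a : ℝ) {c : ℝ} (hc : c < 0) :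
    (fun x => m + c * (x - a)) '' Set.Iic a = Set.Ici m := by
  ext t
  constructor
  · rintro ⟨x, hx, rfl⟩
    have : 0 ≤ c * (x - a) := mul_nonneg_of_nonpos_of_nonpos hc.le (sub_nonpos.2 hx)
    simpa using this
  · intro ht
    have hc' := hc.ne
    refine ⟨a + (t - m) / c, ?_, by field_simp; ring⟩
    have : (t - m) / c ≤ 0 := div_nonpos_of_nonneg_of_nonpos (sub_nonneg.2 ht) hc.le
    simpa using this

/-- If the imaginary density `k` associated with an arrival flow-rate `g` is defined by
`k x = (1/β)·g(t₁ x) + (1/γ)·g(t₂ x)` for `x ≤ a`, then total mass is conserved: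
`∫_{−∞}^{a} k(x) dx = ∫_ℝ g(t) dt`. -/
theorem mass_conserved_under_change_of_variables
    (α β γ Υ₀ tstar : ℝ) (hα : 0 < α) (hβ : 0 < β) (hγ : 0 < γ) (hΥ₀ : 0 ≤ Υ₀)
    (a : ℝ) (ha : a = -(α * Υ₀))
    (t₁ t₂ : ℝ → ℝ)
    (ht₁ : ∀ x, t₁ x = tstar + (x + α * Υ₀) / β)
    (ht₂ : ∀ x, t₂ x = tstar - (x + α * Υ₀) / γ)
    (g : ℝ → ℝ) (hmeas : Measurable g) (hint : Integrable g)
    (k : ℝ → ℝ)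
    (hk : ∀ x ≤ a, k x = (1 / β) * g (t₁ x) + (1 / γ) * g (t₂ x)) :
    ∫ x in Set.Iic a, k x = ∫ t, g t := by
  obtain ⟨hint₁, heq₁⟩ := integral_comp_affine_image hint tstar a
    (c := 1 / β) (by positivity) (measurableSet_Iic (a := a))
  obtain ⟨hint₂, heq₂⟩ := integral_comp_affine_image hint tstar a
    (c := -(1 / γ)) (neg_ne_zero.2 (by positivity)) (measurableSet_Iic (a := a))
  rw [affine_image_Iic_of_pos _ _ (by positivity)] at heq₁
  rw [affine_image_Iic_of_neg _ _ (neg_lt_zero.2 (by positivity))] at heq₂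
  have hk' : ∀ x ∈ Set.Iic a, k x = |1 / β| * g (tstar + 1 / β * (x - a)) +
      |-(1 / γ)| * g (tstar + -(1 / γ) * (x - a)) := by
    intro x hx
    have e₁ : tstar + 1 / β * (x - a) = t₁ x := by rw [ht₁, ha]; ring
    have e₂ : tstar + -(1 / γ) * (x - a) = t₂ x := by rw [ht₂, ha]; ring
    rw [hk x hx, e₁, e₂, abs_neg, abs_of_pos (one_div_pos.2 hβ), abs_of_pos (one_div_pos.2 hγ)]
  rw [setIntegral_congr_fun measurableSet_Iic hk', integral_add hint₁ hint₂, heq₁, heq₂,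
    integral_Ici_eq_integral_Ioi,
    intervalIntegral.integral_Iic_add_Ioi hint.integrableOn hint.integrableOn]
end

section
/- Let k, q : ℝ × ℝ → ℝ be functions of day r and payoff x ≤ a such that: for each r, q(r, ·) is nonnegative and integrable on (−∞, a], q(r, a) = 0, x·q(r, x) → 0 as x → −∞, the partial derivatives exist and satisfy the conservation law ∂k/∂r (r, x) = −∂q/∂x (r, x), x·∂q/∂x(r, ·) is integrable on (−∞, a], and differentiation under the integral sign is valid: d/dr ∫_{−∞}^{a} x·k(r, x) dx = ∫_{−∞}^{a} x·(∂k/∂r)(r, x) dx. Then the potential Φ(r) = −∫_{−∞}^{a} x·k(r, x) dx satisfies dΦ/dr = −∫_{−∞}^{a} q(r, x) dx ≤ 0. -/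
/-!
By the conservation law, `∫ x * ∂k/∂r = -∫ x * ∂q/∂x` over `(-∞, a]`. Integration by parts turns the
right-hand side into `∫ q`, since `x * q r x` vanishes both at `a` and at `-∞`; this step is the
fundamental theorem of calculus on a half-line, `integral_Iic_of_hasDerivAt_of_tendsto'`, applied to
`x ↦ x * q r x`. Negating gives the derivative of the potential, and `q ≥ 0` gives its sign.
-/

open MeasureTheory Filter

/-- Lyapunov-type dissipation: under the conservation law `∂k/∂r = −∂q/∂x` with
nonnegative flow `q`, zero flow at the boundary `x = a`, vanishing `x·q(r,x)` as
`x → −∞`, and validity of differentiation under the integral sign, the potential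
`Φ(r) = −∫_{−∞}^{a} x·k(r,x) dx` satisfies `dΦ/dr = −∫_{−∞}^{a} q(r,x) dx ≤ 0`. -/
theorem potential_derivative_nonpositive
    (α Υ₀ : ℝ) (hα : 0 < α) (hΥ₀ : 0 ≤ Υ₀)
    (a : ℝ) (ha : a = -(α * Υ₀))
    (k q kr qx : ℝ → ℝ → ℝ)
    (hq_nonneg : ∀ r, ∀ x ≤ a, 0 ≤ q r x)
    (hq_int : ∀ r, IntegrableOn (q r) (Set.Iic a))
    (hq_boundary : ∀ r, q r a = 0)
    (hq_atBot : ∀ r, Tendsto (fun x => x * q r x) atBot (nhds 0))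
    (hderiv_k : ∀ r x, HasDerivAt (fun r' => k r' x) (kr r x) r)
    (hderiv_q : ∀ r, ∀ x ≤ a, HasDerivAt (fun x' => q r x') (qx r x) x)
    (hconservation : ∀ r x, kr r x = -(qx r x))
    (hxqx_int : ∀ r, IntegrableOn (fun x => x * qx r x) (Set.Iic a))
    (hdiff_under_int : ∀ r, HasDerivAt (fun r' => ∫ x in Set.Iic a, x * k r' x)
      (∫ x in Set.Iic a, x * kr r x) r) :
    ∀ r, HasDerivAt (fun r' => -∫ x in Set.Iic a, x * k r' x)
        (-∫ x in Set.Iic a, q r x) r ∧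
      (-∫ x in Set.Iic a, q r x) ≤ 0 := by
  intro r
  -- `x ↦ x * q r x` is an antiderivative of `q + x * ∂q/∂x` that vanishes at `a` and at `-∞`.
  have hparts : ∫ x in Set.Iic a, (q r x + x * qx r x) = 0 := by
    have h := integral_Iic_of_hasDerivAt_of_tendsto' (f := fun x => x * q r x)
      (f' := fun x => q r x + x * qx r x)
      (fun x hx => by simpa using (hasDerivAt_id' x).fun_mul (hderiv_q r x hx))
      ((hq_int r).add (hxqx_int r)) (hq_atBot r)
    simpa [hq_boundary r] using h
  rw [integral_add (hq_int r) (hxqx_int r)] at hparts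
  have hkr : ∫ x in Set.Iic a, x * kr r x = ∫ x in Set.Iic a, q r x := by
    simp only [hconservation, mul_neg, integral_neg]
    linarith
  refine ⟨?_, neg_nonpos.mpr (setIntegral_nonneg measurableSet_Iic (hq_nonneg r))⟩
  rw [← hkr]
  exact (hdiff_under_int r).fun_neg
end

section
/- The minimum value of the ATUE objective equals that of the SPUE objective: Φ'(g*) = ∫_{t₁(a−L*)}^{t₂(a−L*)} C·φ₂(t) dt = N·(α·Υ₀ + N/(2κ)). -/
/-!
The flow `gstar` is `C` times the indicator of `[t* - L/β, t* + L/γ]`, which gives the first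
equality. The cost is affine on either side of `t*`, so splitting the integral there gives the areas
`α Υ₀ L/β + L²/(2β)` and `α Υ₀ L/γ + L²/(2γ)` (`integral_affine`). Their sum times `C` is
`κ (α Υ₀ L + L²/2)`, and `κ L = N`.
-/

open MeasureTheory

lemma integral_affine (A b c u v : ℝ) :
    ∫ t in u..v, (A + b * (t - c)) =
      (A * v + b * (v - c) ^ 2 / 2) - (A * u + b * (u - c) ^ 2 / 2) := by
  refine intervalIntegral.integral_eq_sub_of_hasDerivAt
    (f := fun t => A * t + b * (t - c) ^ 2 / 2) (fun t _ => ?_)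
    (Continuous.intervalIntegrable (by fun_prop) _ _)
  have h := ((hasDerivAt_id t).const_mul A).add
    (((((hasDerivAt_id t).sub_const c).pow 2).const_mul b).div_const 2)
  convert h using 1
  · funext x
    simp
  · simp
    ring

/-- The minimum value of the ATUE objective equals that of the SPUE objective:
`Φ'(g*) = ∫_{t₁(a−L*)}^{t₂(a−L*)} C·φ₂(t) dt = N·(α·Υ₀ + N/(2κ))`. -/
theorem atue_minimum_value
    (α β γ Υ₀ tstar C N : ℝ) (hα : 0 < α) (hβ : 0 < β) (hγ : 0 < γ) (hΥ₀ : 0 ≤ Υ₀)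
    (hC : 0 < C) (hN : 0 < N)
    (a κ L : ℝ) (ha : a = -(α * Υ₀)) (hκ : κ = (1 / β + 1 / γ) * C) (hL : L = N / κ)
    (φ₂ : ℝ → ℝ)
    (hφ₂ : ∀ t, φ₂ t = α * Υ₀ + β * max (tstar - t) 0 + γ * max (t - tstar) 0)
    (t₁ t₂ : ℝ → ℝ)
    (ht₁ : ∀ x, t₁ x = tstar + (x + α * Υ₀) / β)
    (ht₂ : ∀ x, t₂ x = tstar - (x + α * Υ₀) / γ)
    (gstar : ℝ → ℝ)
    (hgstar : ∀ t, gstar t = if t₁ (a - L) ≤ t ∧ t ≤ t₂ (a - L) then C else 0) :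
    (∫ t, gstar t * φ₂ t) = (∫ t in Set.Icc (t₁ (a - L)) (t₂ (a - L)), C * φ₂ t) ∧
      (∫ t, gstar t * φ₂ t) = N * (α * Υ₀ + N / (2 * κ)) := by
  have hκ0 : 0 < κ := by rw [hκ]; positivity
  have hL0 : 0 < L := by rw [hL]; positivity
  have e₁ : t₁ (a - L) = tstar - L / β := by rw [ht₁, ha]; ring
  have e₂ : t₂ (a - L) = tstar + L / γ := by rw [ht₂, ha]; ring
  have hlb : 0 < L / β := by positivity
  have hlg : 0 < L / γ := by positivity
  have hcont : Continuous φ₂ := by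
    rw [funext hφ₂]; fun_prop
  have first : (∫ t, gstar t * φ₂ t) =
      ∫ t in Set.Icc (t₁ (a - L)) (t₂ (a - L)), C * φ₂ t := by
    rw [← integral_indicator measurableSet_Icc]
    congr 1
    funext t
    rw [hgstar]
    simp [Set.indicator_apply, Set.mem_Icc]
  refine ⟨first, ?_⟩
  have left : ∫ t in (tstar - L / β)..tstar, φ₂ t = α * Υ₀ * (L / β) + β * (L / β) ^ 2 / 2 := by
    have h : ∫ t in (tstar - L / β)..tstar, φ₂ t =
        ∫ t in (tstar - L / β)..tstar, (α * Υ₀ + (-β) * (t - tstar)) := by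
      refine intervalIntegral.integral_congr fun t ht => ?_
      rw [Set.uIcc_of_le (by linarith)] at ht
      have h2 := ht.2
      simp only [hφ₂]
      rw [max_eq_left (by linarith), max_eq_right (by linarith)]
      ring
    rw [h, integral_affine]
    ring
  have right : ∫ t in tstar..(tstar + L / γ), φ₂ t = α * Υ₀ * (L / γ) + γ * (L / γ) ^ 2 / 2 := by
    have h : ∫ t in tstar..(tstar + L / γ), φ₂ t =
        ∫ t in tstar..(tstar + L / γ), (α * Υ₀ + γ * (t - tstar)) := by
      refine intervalIntegral.integral_congr fun t ht => ?_
      rw [Set.uIcc_of_le (by linarith)] at ht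
      have h1 := ht.1
      simp only [hφ₂]
      rw [max_eq_right (by linarith), max_eq_left (by linarith)]
      ring
    rw [h, integral_affine]
    ring
  rw [first, e₁, e₂, integral_Icc_eq_integral_Ioc,
    ← intervalIntegral.integral_of_le (by linarith), intervalIntegral.integral_const_mul,
    ← intervalIntegral.integral_add_adjacent_intervals
      (hcont.intervalIntegrable _ tstar) (hcont.intervalIntegrable _ _), left, right]
  have hNL : N = κ * L := by rw [hL]; field_simp
  have hhalf : N / (2 * κ) = L / 2 := by rw [hNL]; field_simp
  rw [hhalf, hNL, hκ]
  field_simp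
end
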